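/- Consider K users and T transmit antennas with channel matrices H_k ∈ ℂ^{N×T}, weights α_k ≥ 0, noise variance σ² > 0, and SNR gap Γ_m > 0. For beamformers w = (w_1,…,w_K), w_k ∈ ℂ^T, define V_k(w) = Γ_m(Σ_{j≠k} H_k w_j w_jᴴ H_kᴴ + σ² I) + H_k w_k w_kᴴ H_kᴴ, and for u ∈ ℂ^N define e_k(w,u) = Re(uᴴ V_k(w) u) − 2 Re(uᴴ H_k w_k) + 1; define R_k(w) = log(1 + SINR_k(w)/Γ_m) with SINR_k(w) = Re(w_kᴴ H_kᴴ (Σ_{j≠k} H_k w_j w_jᴴ H_kᴴ + σ² I)⁻¹ H_k w_k). Then for every nonempty set S ⊆ (ℂ^T)^K of beamformer tuples, the supremum over w ∈ S of Σ_k α_k R_k(w) equals the supremum over w ∈ S, u_1,…,u_K ∈ ℂ^N, and ρ_1,…,ρ_K ∈ ℝ_{>0} of Σ_k α_k (log ρ_k − ρ_k e_k(w,u_k) + 1). -/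

import Mathlib

open Matrix
open scoped ComplexOrder

/-!
Fix the beamformers. The mean squared error is a quadratic in the receiver `u`; completing the
square shows that it is minimised at the solution `g` of `V g = h`. Since `V` is a rank-one
perturbation of `Γ J`, this `g` is a multiple of `J⁻¹ h`, and the minimum is `(1 + SINR / Γ)⁻¹`.
Maximising `log ρ - ρ m + 1` over `ρ` then gives `log m⁻¹` at `ρ = m⁻¹`, which is the rate. The
users have separate variables and the weights are nonnegative, so the maxima add up. As the maxima
are attained, the two sets of objective values are mutually cofinal and have the same supremum,
bounded or not.
-/

section Suprema

lemma csSup_eq_csSup_of_forall_isGreatest {W β : Type*} [ConditionallyCompleteLinearOrder β]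
    {S : Set W} {f : W → β} {B : W → Set β} (hB : ∀ w ∈ S, IsGreatest (B w) (f w)) :
    sSup {r | ∃ w ∈ S, r = f w} = sSup {r | ∃ w ∈ S, r ∈ B w} := by
  apply csSup_eq_csSup_of_forall_exists_le
  · rintro _ ⟨w, hw, rfl⟩
    exact ⟨f w, ⟨w, hw, (hB w hw).1⟩, le_rfl⟩
  · rintro r ⟨w, hw, hr⟩
    exact ⟨f w, ⟨w, hw, rfl⟩, (hB w hw).2 hr⟩

lemma log_sub_mul_add_one_le_log_inv {m ρ : ℝ} (hm : 0 < m) (hρ : 0 < ρ) :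
    Real.log ρ - ρ * m + 1 ≤ Real.log m⁻¹ := by
  have hlog := Real.log_le_sub_one_of_pos (mul_pos hρ hm)
  rw [Real.log_mul hρ.ne' hm.ne'] at hlog
  rw [Real.log_inv]
  linarith

lemma isGreatest_log_sub_mul_add_one {U : Type*} {f : U → ℝ} {m : ℝ}
    (hf : IsLeast (Set.range f) m) (hm : 0 < m) :
    IsGreatest {r | ∃ u ρ, 0 < ρ ∧ r = Real.log ρ - ρ * f u + 1} (Real.log m⁻¹) := by
  constructor
  · obtain ⟨u, hu⟩ := hf.1
    refine ⟨u, m⁻¹, inv_pos.2 hm, ?_⟩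
    rw [hu, inv_mul_cancel₀ hm.ne', sub_add_cancel]
  · rintro _ ⟨u, ρ, hρ, rfl⟩
    have hmu : m ≤ f u := hf.2 ⟨u, rfl⟩
    calc Real.log ρ - ρ * f u + 1 ≤ Real.log ρ - ρ * m + 1 := by gcongr
      _ ≤ Real.log m⁻¹ := log_sub_mul_add_one_le_log_inv hm hρ

end Suprema

variable {𝕜 n : Type*} [RCLike 𝕜]

section Covariance

/-- The covariance matrix `Γ J + h hᴴ` of the received signal, for the interference-plus-noise
covariance matrix `J` scaled by the SNR gap `Γ` and the effective channel `h`. -/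
def gapCovariance (Γ : ℝ) (J : Matrix n n 𝕜) (h : n → 𝕜) : Matrix n n 𝕜 :=
  (Γ : 𝕜) • J + vecMulVec h (star h)

lemma posSemidef_gapCovariance [Finite n] {J : Matrix n n 𝕜} {Γ : ℝ}
    (hJ : J.PosSemidef) (hΓ : 0 ≤ Γ) (h : n → 𝕜) : (gapCovariance Γ J h).PosSemidef :=
  have := Fintype.ofFinite n
  (hJ.smul (RCLike.ofReal_nonneg.2 hΓ)).add (posSemidef_vecMulVec_self_star h)

lemma posDef_sum_vecMulVec_add_smul_one [Finite n] [DecidableEq n] {ι : Type*} (s : Finset ι)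
    (v : ι → n → 𝕜) {c : 𝕜} (hc : 0 < c) :
    (∑ j ∈ s, vecMulVec (v j) (star (v j)) + c • (1 : Matrix n n 𝕜)).PosDef :=
  have := Fintype.ofFinite n
  PosDef.posSemidef_add (posSemidef_sum s fun j _ => posSemidef_vecMulVec_self_star (v j))
    (PosDef.one.smul hc)

end Covariance

variable [Fintype n]

section MeanSquaredError

/-- The mean squared error of the linear receiver `u` for a unit-power symbol arriving along the
effective channel `h`, when the received signal has covariance matrix `V`. -/
def mse (V : Matrix n n 𝕜) (h u : n → 𝕜) : ℝ :=
  RCLike.re (star u ⬝ᵥ V *ᵥ u) - 2 * RCLike.re (star u ⬝ᵥ h) + 1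

lemma mse_eq_re_dotProduct_sub_add {V : Matrix n n 𝕜} (hV : V.IsHermitian) {h g : n → 𝕜}
    (hg : V *ᵥ g = h) (u : n → 𝕜) :
    mse V h u =
      RCLike.re (star (u - g) ⬝ᵥ V *ᵥ (u - g)) + (1 - RCLike.re (star g ⬝ᵥ h)) := by
  have hcross : star g ⬝ᵥ V *ᵥ u = star (star u ⬝ᵥ h) := by
    rw [← hg, star_dotProduct, star_mulVec, hV.eq, dotProduct_mulVec]
  simp only [mse, star_sub, mulVec_sub, dotProduct_sub, sub_dotProduct, hg, hcross, map_sub,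
    RCLike.star_def, RCLike.conj_re]
  ring

lemma isLeast_range_mse {V : Matrix n n 𝕜} (hV : V.PosSemidef) {h g : n → 𝕜}
    (hg : V *ᵥ g = h) : IsLeast (Set.range (mse V h)) (1 - RCLike.re (star g ⬝ᵥ h)) := by
  constructor
  · refine ⟨g, ?_⟩
    simp [mse_eq_re_dotProduct_sub_add hV.isHermitian hg]
  · rintro _ ⟨u, rfl⟩
    rw [mse_eq_re_dotProduct_sub_add hV.isHermitian hg]
    exact le_add_of_nonneg_left (hV.re_dotProduct_nonneg _)

end MeanSquaredError

section Rate

variable [DecidableEq n] {J : Matrix n n 𝕜} {Γ : ℝ}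

/-- The signal-to-interference-plus-noise ratio `hᴴ J⁻¹ h` of the effective channel `h` against the
interference-plus-noise covariance matrix `J`. -/
noncomputable def sinr (J : Matrix n n 𝕜) (h : n → 𝕜) : ℝ :=
  RCLike.re (star h ⬝ᵥ J⁻¹ *ᵥ h)

/-- The achievable rate, in nats, of a user with SNR gap `Γ`, interference-plus-noise covariance
matrix `J` and effective channel `h`. -/
noncomputable def rate (Γ : ℝ) (J : Matrix n n 𝕜) (h : n → 𝕜) : ℝ :=
  Real.log (1 + sinr J h / Γ)

lemma sinr_nonneg (hJ : J.PosSemidef) (h : n → 𝕜) : 0 ≤ sinr J h :=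
  hJ.inv.re_dotProduct_nonneg h

lemma sinr_mulVec {t : Type*} [Fintype t] (J : Matrix n n 𝕜) (H : Matrix n t 𝕜) (w : t → 𝕜) :
    sinr J (H *ᵥ w) = RCLike.re (star w ⬝ᵥ (Hᴴ * J⁻¹ * H) *ᵥ w) := by
  rw [sinr, star_mulVec, ← dotProduct_mulVec, mulVec_mulVec, mulVec_mulVec, Matrix.mul_assoc]

lemma ofReal_sinr (hJ : J.IsHermitian) (h : n → 𝕜) :
    (sinr J h : 𝕜) = star h ⬝ᵥ J⁻¹ *ᵥ h :=
  RCLike.conj_eq_iff_re.1 (RCLike.conj_eq_iff_im.2 (hJ.inv.im_star_dotProduct_mulVec_self h))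

lemma gapCovariance_mulVec_inv_mulVec (hJ : J.PosDef) (Γ : ℝ) (h : n → 𝕜) :
    gapCovariance Γ J h *ᵥ (J⁻¹ *ᵥ h) = ((Γ + sinr J h : ℝ) : 𝕜) • h := by
  have hdet : IsUnit J.det := (isUnit_iff_isUnit_det J).1 hJ.isUnit
  rw [gapCovariance, add_mulVec, smul_mulVec, mulVec_mulVec, mul_nonsing_inv J hdet, one_mulVec,
    vecMulVec_mulVec, ← ofReal_sinr hJ.isHermitian, op_smul_eq_smul, ← add_smul, RCLike.ofReal_add]

lemma isLeast_range_mse_gapCovariance (hJ : J.PosDef) (hΓ : 0 < Γ) (h : n → 𝕜) :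
    IsLeast (Set.range (mse (gapCovariance Γ J h) h)) (1 + sinr J h / Γ)⁻¹ := by
  have hpos : 0 < Γ + sinr J h := add_pos_of_pos_of_nonneg hΓ (sinr_nonneg hJ.posSemidef h)
  set c : ℝ := (Γ + sinr J h)⁻¹ with hc
  have hg : gapCovariance Γ J h *ᵥ ((c : 𝕜) • J⁻¹ *ᵥ h) = h := by
    rw [mulVec_smul, gapCovariance_mulVec_inv_mulVec hJ, smul_smul, ← RCLike.ofReal_mul, hc,
      inv_mul_cancel₀ hpos.ne', RCLike.ofReal_one, one_smul]
  have hinner : RCLike.re (star ((c : 𝕜) • J⁻¹ *ᵥ h) ⬝ᵥ h) = c * sinr J h := by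
    rw [star_dotProduct, dotProduct_smul, smul_eq_mul, ← ofReal_sinr hJ.isHermitian,
      ← RCLike.ofReal_mul, RCLike.star_def, RCLike.conj_ofReal, RCLike.ofReal_re]
  have hmin : 1 - c * sinr J h = (1 + sinr J h / Γ)⁻¹ := by
    rw [hc]
    field_simp
    ring
  rw [← hmin, ← hinner]
  exact isLeast_range_mse (posSemidef_gapCovariance hJ.posSemidef hΓ.le h) hg

lemma isGreatest_rate (hJ : J.PosDef) (hΓ : 0 < Γ) (h : n → 𝕜) :
    IsGreatest {r | ∃ u ρ, 0 < ρ ∧ r = Real.log ρ - ρ * mse (gapCovariance Γ J h) h u + 1}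
      (rate Γ J h) := by
  have hsinr : 0 ≤ sinr J h := sinr_nonneg hJ.posSemidef h
  rw [rate, ← inv_inv (1 + sinr J h / Γ)]
  exact isGreatest_log_sub_mul_add_one (isLeast_range_mse_gapCovariance hJ hΓ h) (by positivity)

end Rate

theorem wsr_wmmse_equivalence_general [DecidableEq n] {ι : Type*} [Fintype ι] {α : ι → ℝ}
    (hα : ∀ k, 0 ≤ α k) {Γ : ℝ} (hΓ : 0 < Γ) {J : ι → Matrix n n 𝕜} (hJ : ∀ k, (J k).PosDef)
    (h : ι → n → 𝕜) :
    IsGreatest {r | ∃ (u : ι → n → 𝕜) (ρ : ι → ℝ), (∀ k, 0 < ρ k) ∧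
        r = ∑ k, α k *
          (Real.log (ρ k) - ρ k * mse (gapCovariance Γ (J k) (h k)) (h k) (u k) + 1)}
      (∑ k, α k * rate Γ (J k) (h k)) := by
  have hrate := fun k => isGreatest_rate (hJ k) hΓ (h k)
  constructor
  · choose u ρ hρ hmax using fun k => (hrate k).1
    exact ⟨u, ρ, hρ, Finset.sum_congr rfl fun k _ => congrArg (α k * ·) (hmax k)⟩
  · rintro _ ⟨u, ρ, hρ, rfl⟩
    refine Finset.sum_le_sum fun k _ => mul_le_mul_of_nonneg_left ?_ (hα k)
    exact (hrate k).2 ⟨u k, ρ k, hρ k, rfl⟩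

/-- Equivalence between the weighted sum rate maximization problem and the weighted
sum-MSE (WMMSE) problem over any nonempty constraint set `S` of transmit beamformer
tuples: the supremum over `w ∈ S` of `Σ_k α_k R_k(w)` equals the supremum over
`w ∈ S`, receive beamformers `u_k`, and positive MSE weights `ρ_k` of
`Σ_k α_k (log ρ_k - ρ_k e_k(w, u_k) + 1)`. -/
theorem wsr_wmmse_equivalence {K T N : ℕ}
    (H : Fin K → Matrix (Fin N) (Fin T) ℂ)
    (α : Fin K → ℝ) (hα : ∀ k, 0 ≤ α k)
    (σ2 Γm : ℝ) (hσ : 0 < σ2) (hΓm : 0 < Γm) :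
    let Jmat : (Fin K → Fin T → ℂ) → Fin K → Matrix (Fin N) (Fin N) ℂ := fun w k =>
      (∑ j ∈ Finset.univ.erase k,
        Matrix.vecMulVec (H k *ᵥ w j) (star (H k *ᵥ w j))) +
        (σ2 : ℂ) • (1 : Matrix (Fin N) (Fin N) ℂ)
    let V : (Fin K → Fin T → ℂ) → Fin K → Matrix (Fin N) (Fin N) ℂ := fun w k =>
      (Γm : ℂ) • Jmat w k + Matrix.vecMulVec (H k *ᵥ w k) (star (H k *ᵥ w k))
    let e : (Fin K → Fin T → ℂ) → Fin K → (Fin N → ℂ) → ℝ := fun w k u =>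
      (star u ⬝ᵥ V w k *ᵥ u).re - 2 * (star u ⬝ᵥ (H k *ᵥ w k)).re + 1
    let R : (Fin K → Fin T → ℂ) → Fin K → ℝ := fun w k =>
      Real.log (1 + (star (w k) ⬝ᵥ ((H k)ᴴ * (Jmat w k)⁻¹ * H k) *ᵥ w k).re / Γm)
    ∀ S : Set (Fin K → Fin T → ℂ), S.Nonempty →
      sSup {r : ℝ | ∃ w ∈ S, r = ∑ k, α k * R w k} =
        sSup {r : ℝ | ∃ w ∈ S, ∃ (u : Fin K → Fin N → ℂ) (ρ : Fin K → ℝ),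
          (∀ k, 0 < ρ k) ∧
          r = ∑ k, α k * (Real.log (ρ k) - ρ k * e w k (u k) + 1)} := by
  intro Jmat V e R S _
  have hJ (w k) : (Jmat w k).PosDef :=
    posDef_sum_vecMulVec_add_smul_one _ _ (Complex.zero_lt_real.2 hσ)
  have hR (w k) : R w k = rate Γm (Jmat w k) (H k *ᵥ w k) := by
    rw [rate, sinr_mulVec]
    rfl
  simp only [hR]
  exact csSup_eq_csSup_of_forall_isGreatest fun w _ =>
    wsr_wmmse_equivalence_general hα hΓm (hJ w) fun k => H k *ᵥ w k
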